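/- arXiv:2403.10306 — 2 statements merged into one kernel-verified Lean document; each statement's English description precedes it below -/
import Mathlib

section
/- (Strict Finsler's lemma) Let M, N be real symmetric n×n matrices. Then there exists α ∈ ℝ such that M + αN ≻ 0 if and only if every x ∈ ℝⁿ with x ≠ 0 and xᵀNx = 0 satisfies xᵀMx > 0. -/
/-!
Write `q_A x = xᵀ A x`. The proof of the nontrivial direction rests on two facts.

* If `q_N x > 0 > q_N y`, then the restriction of `q_N` to the plane spanned by `x` and `y` is
  indefinite, so `q_N (x + t y)` has one positive and one negative root `t`. At both roots `q_M` is
  positive, and the positive combination of these two inequalities that cancels the cross term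
  `xᵀ M y` is `q_M x * (-q_N y) + q_M y * q_N x > 0` (`cross_pos`). Thus every lower bound on `α`
  coming from a vector `x` with `q_N x > 0` lies below every upper bound coming from a vector `y`
  with `q_N y < 0`.
* By compactness of the unit sphere, the hypothesis survives replacing `M` by `M - ε I` for a small
  `ε > 0` (`exists_perturb`). It therefore suffices to find `α` with `q_M + α q_N ≥ 0`.

For the weak inequality, if some vector has `q_M ≤ 0` and `q_N ≥ 0`, then
`α = max (-q_M / q_N)` over the unit vectors of this kind works (`exists_nonneg`); the case
`q_N ≤ 0` follows by replacing `N` with `-N`, and if `q_M ≤ 0` never happens, `α = 0` works.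
-/

open Matrix

section Finsler

variable {n : ℕ}

lemma quad_smul (A : Matrix (Fin n) (Fin n) ℝ) (c : ℝ) (x : Fin n → ℝ) :
    (c • x) ⬝ᵥ (A *ᵥ (c • x)) = c ^ 2 * (x ⬝ᵥ (A *ᵥ x)) := by
  simp only [mulVec_smul, smul_dotProduct, dotProduct_smul, smul_eq_mul]
  ring

lemma quad_add_smul {A : Matrix (Fin n) (Fin n) ℝ} (hA : A.IsSymm) (t : ℝ) (x y : Fin n → ℝ) :
    (x + t • y) ⬝ᵥ (A *ᵥ (x + t • y)) =
      x ⬝ᵥ (A *ᵥ x) + 2 * t * (x ⬝ᵥ (A *ᵥ y)) + t ^ 2 * (y ⬝ᵥ (A *ᵥ y)) := by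
  have h : y ⬝ᵥ (A *ᵥ x) = x ⬝ᵥ (A *ᵥ y) := by
    rw [dotProduct_mulVec, ← mulVec_transpose, hA.eq, dotProduct_comm]
  simp only [mulVec_smul, mulVec_add, add_dotProduct, dotProduct_add, smul_dotProduct,
    dotProduct_smul, smul_eq_mul, h]
  ring

lemma quad_add_smul_matrix (A B : Matrix (Fin n) (Fin n) ℝ) (c : ℝ) (x : Fin n → ℝ) :
    x ⬝ᵥ ((A + c • B) *ᵥ x) = x ⬝ᵥ (A *ᵥ x) + c * (x ⬝ᵥ (B *ᵥ x)) := by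
  simp [add_mulVec, smul_mulVec, dotProduct_add]

lemma continuous_quad (A : Matrix (Fin n) (Fin n) ℝ) :
    Continuous fun x : Fin n → ℝ => x ⬝ᵥ (A *ᵥ x) := by
  fun_prop

lemma exists_smul_sphere {x : Fin n → ℝ} (hx : x ≠ 0) :
    ∃ c : ℝ, 0 < c ∧ ∃ u ∈ Metric.sphere (0 : Fin n → ℝ) 1, x = c • u := by
  have h : 0 < ‖x‖ := norm_pos_iff.2 hx
  refine ⟨‖x‖, h, ‖x‖⁻¹ • x, ?_, ?_⟩
  · simp [norm_smul, h.ne']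
  · rw [smul_smul, mul_inv_cancel₀ h.ne', one_smul]

lemma ne_zero_of_sphere {u : Fin n → ℝ} (hu : u ∈ Metric.sphere (0 : Fin n → ℝ) 1) : u ≠ 0 := by
  rintro rfl
  simp at hu

/-- The bound on `α` imposed by a vector with `q_N > 0` is compatible with the one imposed by a
vector with `q_N < 0`. -/
lemma cross_pos {M N : Matrix (Fin n) (Fin n) ℝ} (hM : M.IsSymm) (hN : N.IsSymm)
    (h : ∀ x : Fin n → ℝ, x ≠ 0 → x ⬝ᵥ (N *ᵥ x) = 0 → 0 < x ⬝ᵥ (M *ᵥ x))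
    {x y : Fin n → ℝ} (hx : 0 < x ⬝ᵥ (N *ᵥ x)) (hy : y ⬝ᵥ (N *ᵥ y) < 0) :
    0 < x ⬝ᵥ (M *ᵥ x) * -(y ⬝ᵥ (N *ᵥ y)) + y ⬝ᵥ (M *ᵥ y) * (x ⬝ᵥ (N *ᵥ x)) := by
  -- `x + t • y = 0` would give `q_N x = t ^ 2 * q_N y ≤ 0`.
  have hne : ∀ t : ℝ, x + t • y ≠ 0 := by
    intro t ht
    have hxy : x = (-t) • y := by rw [neg_smul]; exact eq_neg_of_add_eq_zero_left ht
    rw [hxy, quad_smul] at hx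
    nlinarith [sq_nonneg (-t)]
  have key : ∀ t : ℝ,
      x ⬝ᵥ (N *ᵥ x) + 2 * t * (x ⬝ᵥ (N *ᵥ y)) + t ^ 2 * (y ⬝ᵥ (N *ᵥ y)) = 0 →
      0 < x ⬝ᵥ (M *ᵥ x) + 2 * t * (x ⬝ᵥ (M *ᵥ y)) + t ^ 2 * (y ⬝ᵥ (M *ᵥ y)) := by
    intro t ht
    rw [← quad_add_smul hM]
    exact h _ (hne t) (by rw [quad_add_smul hN, ht])
  generalize x ⬝ᵥ (N *ᵥ x) = p at *
  generalize x ⬝ᵥ (N *ᵥ y) = b at *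
  generalize x ⬝ᵥ (M *ᵥ x) = u at *
  generalize x ⬝ᵥ (M *ᵥ y) = m at *
  generalize y ⬝ᵥ (M *ᵥ y) = v at *
  obtain ⟨r, hr⟩ : ∃ r, y ⬝ᵥ (N *ᵥ y) = -r := ⟨_, (neg_neg _).symm⟩
  rw [hr] at hy key ⊢
  have hr0 : 0 < r := by linarith
  have hpr : 0 < p * r := mul_pos hx hr0
  obtain ⟨s, hs, hs0⟩ : ∃ s : ℝ, s ^ 2 = b ^ 2 + p * r ∧ 0 ≤ s :=
    ⟨√(b ^ 2 + p * r), Real.sq_sqrt (by positivity), Real.sqrt_nonneg _⟩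
  have hbs : |b| < s := abs_lt_of_sq_lt_sq (by linarith) hs0
  obtain ⟨hb1, hb2⟩ := abs_lt.1 hbs
  have hspos : 0 < s := (abs_nonneg b).trans_lt hbs
  -- The roots of `p + 2 b t - r t ^ 2` are `(b ± s) / r`.
  have h1 := key ((b + s) / r) (by field_simp; linear_combination -hs)
  have h2 := key ((b - s) / r) (by field_simp; linear_combination -hs)
  have e : (s - b) * (u + 2 * ((b + s) / r) * m + ((b + s) / r) ^ 2 * v) +
      (b + s) * (u + 2 * ((b - s) / r) * m + ((b - s) / r) ^ 2 * v) =
      2 * s / r * (u * - -r + v * p) := by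
    field_simp
    linear_combination 2 * s * v * hs
  have hpos := add_pos (mul_pos (sub_pos.2 hb2) h1) (mul_pos (by linarith : 0 < b + s) h2)
  rw [e] at hpos
  exact pos_of_mul_pos_right hpos (by positivity)

/-- The hypothesis of Finsler's lemma is stable under a small shift of `M` by a multiple of the
identity. -/
lemma exists_perturb {M N : Matrix (Fin n) (Fin n) ℝ}
    (h : ∀ x : Fin n → ℝ, x ≠ 0 → x ⬝ᵥ (N *ᵥ x) = 0 → 0 < x ⬝ᵥ (M *ᵥ x)) :
    ∃ ε : ℝ, 0 < ε ∧ ∀ x : Fin n → ℝ, x ≠ 0 → x ⬝ᵥ (N *ᵥ x) = 0 →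
      0 < x ⬝ᵥ ((M + (-ε) • (1 : Matrix (Fin n) (Fin n) ℝ)) *ᵥ x) := by
  have hdot : ∀ x : Fin n → ℝ, x ≠ 0 → 0 < x ⬝ᵥ x := fun x hx => by
    simpa using dotProduct_star_self_pos_iff.2 hx
  set K : Set (Fin n → ℝ) := Metric.sphere 0 1 ∩ {x | x ⬝ᵥ (N *ᵥ x) = 0} with hK
  have hKc : IsCompact K :=
    (isCompact_sphere _ _).inter_right (isClosed_eq (continuous_quad N) continuous_const)
  have hcont : ContinuousOn (fun x : Fin n → ℝ => x ⬝ᵥ (M *ᵥ x) / x ⬝ᵥ x) K :=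
    (continuous_quad M).continuousOn.div (by fun_prop)
      fun x hx => (hdot x (ne_zero_of_sphere hx.1)).ne'
  obtain ⟨ε, hε, hlt⟩ : ∃ ε : ℝ, 0 < ε ∧ ∀ u ∈ K, ε < u ⬝ᵥ (M *ᵥ u) / u ⬝ᵥ u := by
    rcases K.eq_empty_or_nonempty with he | hne
    · exact ⟨1, one_pos, by simp [he]⟩
    · obtain ⟨w, hw, hmin⟩ := hKc.exists_isMinOn hne hcont
      have hw0 := ne_zero_of_sphere hw.1
      have hpos : 0 < w ⬝ᵥ (M *ᵥ w) / w ⬝ᵥ w := div_pos (h w hw0 hw.2) (hdot w hw0)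
      exact ⟨_, half_pos hpos, fun u hu => (half_lt_self hpos).trans_le (hmin hu)⟩
  refine ⟨ε, hε, fun x hx hNx => ?_⟩
  obtain ⟨c, hc, u, hu, rfl⟩ := exists_smul_sphere hx
  rw [quad_smul] at hNx ⊢
  have hc2 : 0 < c ^ 2 := by positivity
  have huK : u ∈ K := ⟨hu, (mul_eq_zero.1 hNx).resolve_left hc2.ne'⟩
  have := (lt_div_iff₀ (hdot u (ne_zero_of_sphere hu))).1 (hlt u huK)
  refine mul_pos hc2 ?_
  rw [quad_add_smul_matrix, one_mulVec]
  linarith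

/-- The weak inequality, when some nonzero vector forces `α ≥ 0`. -/
lemma exists_nonneg {M N : Matrix (Fin n) (Fin n) ℝ} (hM : M.IsSymm) (hN : N.IsSymm)
    (h : ∀ x : Fin n → ℝ, x ≠ 0 → x ⬝ᵥ (N *ᵥ x) = 0 → 0 < x ⬝ᵥ (M *ᵥ x))
    {z : Fin n → ℝ} (hz : z ≠ 0) (hMz : z ⬝ᵥ (M *ᵥ z) ≤ 0) (hNz : 0 ≤ z ⬝ᵥ (N *ᵥ z)) :
    ∃ α : ℝ, ∀ x : Fin n → ℝ, x ≠ 0 → 0 ≤ x ⬝ᵥ (M *ᵥ x) + α * (x ⬝ᵥ (N *ᵥ x)) := by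
  set T : Set (Fin n → ℝ) :=
    Metric.sphere 0 1 ∩ ({x | x ⬝ᵥ (M *ᵥ x) ≤ 0} ∩ {x | 0 ≤ x ⬝ᵥ (N *ᵥ x)}) with hT
  have hTc : IsCompact T := (isCompact_sphere _ _).inter_right
    ((isClosed_le (continuous_quad M) continuous_const).inter
      (isClosed_le continuous_const (continuous_quad N)))
  have hTpos : ∀ x ∈ T, 0 < x ⬝ᵥ (N *ᵥ x) := fun x hx =>
    lt_of_le_of_ne hx.2.2 fun h0 => (h x (ne_zero_of_sphere hx.1) h0.symm).not_ge hx.2.1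
  have hTne : T.Nonempty := by
    obtain ⟨c, hc, u, hu, rfl⟩ := exists_smul_sphere hz
    have hc2 : 0 < c ^ 2 := by positivity
    rw [quad_smul] at hMz hNz
    exact ⟨u, hu, nonpos_of_mul_nonpos_right hMz hc2, nonneg_of_mul_nonneg_right hNz hc2⟩
  have hcont : ContinuousOn (fun x : Fin n → ℝ => -(x ⬝ᵥ (M *ᵥ x)) / x ⬝ᵥ (N *ᵥ x)) T :=
    (continuous_quad M).neg.continuousOn.div (continuous_quad N).continuousOn
      fun x hx => (hTpos x hx).ne'
  obtain ⟨w, hw, hmax⟩ := hTc.exists_isMaxOn hTne hcont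
  have hwN := hTpos w hw
  refine ⟨-(w ⬝ᵥ (M *ᵥ w)) / w ⬝ᵥ (N *ᵥ w), fun x hx => ?_⟩
  have ha : 0 ≤ -(w ⬝ᵥ (M *ᵥ w)) / w ⬝ᵥ (N *ᵥ w) :=
    div_nonneg (neg_nonneg.2 hw.2.1) hwN.le
  obtain ⟨c, hc, u, hu, rfl⟩ := exists_smul_sphere hx
  rw [quad_smul, quad_smul, mul_left_comm, ← mul_add]
  refine mul_nonneg (sq_nonneg c) ?_
  rcases lt_or_ge (u ⬝ᵥ (N *ᵥ u)) 0 with hneg | hnn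
  · have hc := cross_pos hM hN h hwN hneg
    rw [div_mul_eq_mul_div, ← sub_neg_eq_add, ← neg_div, sub_nonneg, div_le_iff₀ hwN]
    linarith
  · rcases le_or_gt (u ⬝ᵥ (M *ᵥ u)) 0 with hMu | hMu
    · have huT : u ∈ T := ⟨hu, hMu, hnn⟩
      have := (div_le_iff₀ (hTpos u huT)).1 (hmax huT)
      linarith
    · exact add_nonneg hMu.le (mul_nonneg ha hnn)

end Finsler

/-- Strict Finsler's lemma: `∃ α, M + α N ≻ 0` iff `xᵀ M x > 0` for all nonzero
`x` with `xᵀ N x = 0`. -/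
theorem stmt_5 {n : ℕ} (M N : Matrix (Fin n) (Fin n) ℝ)
    (hM : M.IsSymm) (hN : N.IsSymm) :
    (∃ α : ℝ, ∀ x : Fin n → ℝ, x ≠ 0 → 0 < x ⬝ᵥ ((M + α • N) *ᵥ x)) ↔
      (∀ x : Fin n → ℝ, x ≠ 0 → x ⬝ᵥ (N *ᵥ x) = 0 → 0 < x ⬝ᵥ (M *ᵥ x)) := by
  constructor
  · rintro ⟨α, hα⟩ x hx hNx
    simpa [quad_add_smul_matrix, hNx] using hα x hx
  · intro h
    obtain ⟨ε, hε, h'⟩ := exists_perturb h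
    have hM' : (M + (-ε) • (1 : Matrix (Fin n) (Fin n) ℝ)).IsSymm :=
      hM.add (isSymm_one.smul _)
    suffices hw : ∃ α : ℝ, ∀ x : Fin n → ℝ, x ≠ 0 →
        0 ≤ x ⬝ᵥ ((M + (-ε) • (1 : Matrix (Fin n) (Fin n) ℝ)) *ᵥ x) + α * (x ⬝ᵥ (N *ᵥ x)) by
      obtain ⟨α, hα⟩ := hw
      refine ⟨α, fun x hx => ?_⟩
      have h1 := hα x hx
      have h2 : 0 < x ⬝ᵥ x := by simpa using dotProduct_star_self_pos_iff.2 hx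
      rw [quad_add_smul_matrix, one_mulVec] at h1
      rw [quad_add_smul_matrix]
      linarith [mul_pos hε h2]
    by_cases hz : ∃ z : Fin n → ℝ, z ≠ 0 ∧
        z ⬝ᵥ ((M + (-ε) • (1 : Matrix (Fin n) (Fin n) ℝ)) *ᵥ z) ≤ 0
    · obtain ⟨z, hz, hMz⟩ := hz
      rcases le_total 0 (z ⬝ᵥ (N *ᵥ z)) with hNz | hNz
      · exact exists_nonneg hM' hN h' hz hMz hNz
      · obtain ⟨α, hα⟩ := exists_nonneg hM' hN.neg
          (fun x hx hNx => h' x hx (by simpa [neg_mulVec] using hNx)) hz hMz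
          (by simpa [neg_mulVec] using hNz)
        exact ⟨-α, fun x hx => by simpa [neg_mulVec] using hα x hx⟩
    · push Not at hz
      exact ⟨0, fun x hx => by simpa only [zero_mul, add_zero] using (hz x hx).le⟩
end

section
/- Let M, N be real symmetric n×n matrices and suppose N is indefinite, i.e., there exist u, v ∈ ℝⁿ with uᵀNu > 0 and vᵀNv < 0. Then there exists α ∈ ℝ such that M + αN ⪰ 0 if and only if every x ∈ ℝⁿ with xᵀNx = 0 satisfies xᵀMx ≥ 0. -/
/-!
For `p u > 0 > p v`, where `p x = xᵀNx` and `m x = xᵀMx`, the quadratic `s ↦ p (s • u + v)` has two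
real roots `s₁ < 0 < s₂` with `s₁ s₂ = p v / p u`. The hypothesis gives `m (sᵢ • u + v) ≥ 0`, and
the positive combination of these two inequalities with weights `s₂` and `-s₁` eliminates the cross
term of `m`, leaving `p u * m v - m u * p v ≥ 0` (`cross_nonneg`). Thus every lower bound
`-m u / p u` that `M + α N ⪰ 0` puts on `α` is at most every upper bound `-m v / p v`, and any `α`
separating the two families works.
-/

open Matrix

lemma quad_smul_add {n : ℕ} (A : Matrix (Fin n) (Fin n) ℝ) (u v : Fin n → ℝ) (s : ℝ) :
    (s • u + v) ⬝ᵥ (A *ᵥ (s • u + v)) =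
      s ^ 2 * (u ⬝ᵥ (A *ᵥ u)) + s * (u ⬝ᵥ (A *ᵥ v) + v ⬝ᵥ (A *ᵥ u)) + v ⬝ᵥ (A *ᵥ v) := by
  simp only [mulVec_add, mulVec_smul, dotProduct_add, add_dotProduct, smul_dotProduct,
    dotProduct_smul, smul_eq_mul]
  ring

/-- A real quadratic whose leading and constant coefficients have opposite signs has roots of both
signs, and their product is given by Vieta's formula. -/
lemma exists_roots {a b c : ℝ} (ha : 0 < a) (hc : c < 0) :
    ∃ s₁ s₂ : ℝ, s₁ < 0 ∧ 0 < s₂ ∧ s₁ ^ 2 * a + s₁ * b + c = 0 ∧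
      s₂ ^ 2 * a + s₂ * b + c = 0 ∧ a * (s₁ * s₂) = c := by
  have hac : a * c < 0 := mul_neg_of_pos_of_neg ha hc
  obtain ⟨D, hD⟩ : ∃ D, D = Real.sqrt (b ^ 2 - 4 * (a * c)) := ⟨_, rfl⟩
  have hsq : D ^ 2 = b ^ 2 - 4 * (a * c) := by
    rw [hD]; exact Real.sq_sqrt (by nlinarith [sq_nonneg b])
  have hbD : |b| < D := by
    apply abs_lt_of_sq_lt_sq (by linarith) (hD ▸ Real.sqrt_nonneg _)
  obtain ⟨h₁, h₂⟩ := abs_lt.mp hbD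
  refine ⟨(-b - D) / (2 * a), (-b + D) / (2 * a), div_neg_of_neg_of_pos (by linarith) (by linarith),
    div_pos (by linarith) (by linarith), ?_, ?_, ?_⟩
  · field_simp
    linear_combination hsq
  · field_simp
    linear_combination hsq
  · field_simp
    linear_combination -hsq

lemma cross_nonneg {n : ℕ} {M N : Matrix (Fin n) (Fin n) ℝ}
    (h : ∀ x : Fin n → ℝ, x ⬝ᵥ (N *ᵥ x) = 0 → 0 ≤ x ⬝ᵥ (M *ᵥ x)) {u v : Fin n → ℝ}
    (hu : 0 < u ⬝ᵥ (N *ᵥ u)) (hv : v ⬝ᵥ (N *ᵥ v) < 0) :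
    (u ⬝ᵥ (M *ᵥ u)) * (v ⬝ᵥ (N *ᵥ v)) ≤ (u ⬝ᵥ (N *ᵥ u)) * (v ⬝ᵥ (M *ᵥ v)) := by
  obtain ⟨s₁, s₂, h₁, h₂, hr₁, hr₂, hs⟩ :=
    exists_roots (b := u ⬝ᵥ (N *ᵥ v) + v ⬝ᵥ (N *ᵥ u)) hu hv
  have e₁ := h (s₁ • u + v) ((quad_smul_add N u v s₁).trans hr₁)
  have e₂ := h (s₂ • u + v) ((quad_smul_add N u v s₂).trans hr₂)
  rw [quad_smul_add] at e₁ e₂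
  have key : 0 ≤ (s₂ - s₁) * (v ⬝ᵥ (M *ᵥ v) - (u ⬝ᵥ (M *ᵥ u)) * (s₁ * s₂)) := by
    linear_combination mul_nonneg h₂.le e₁ + mul_nonneg (neg_nonneg.mpr h₁.le) e₂
  have key' := mul_nonneg hu.le (nonneg_of_mul_nonneg_right key (by linarith))
  rw [← hs]
  linear_combination key'

/-- Non-strict Finsler's lemma for indefinite `N`:
`∃ α, M + α N ⪰ 0` iff (NS2) holds. -/
theorem stmt_6 {n : ℕ} (M N : Matrix (Fin n) (Fin n) ℝ)
    (hM : M.IsSymm) (hN : N.IsSymm)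
    (hind : ∃ u v : Fin n → ℝ, 0 < u ⬝ᵥ (N *ᵥ u) ∧ v ⬝ᵥ (N *ᵥ v) < 0) :
    (∃ α : ℝ, ∀ x : Fin n → ℝ, 0 ≤ x ⬝ᵥ ((M + α • N) *ᵥ x)) ↔
      (∀ x : Fin n → ℝ, x ⬝ᵥ (N *ᵥ x) = 0 → 0 ≤ x ⬝ᵥ (M *ᵥ x)) := by
  have expand : ∀ (α : ℝ) (x : Fin n → ℝ),
      x ⬝ᵥ ((M + α • N) *ᵥ x) = x ⬝ᵥ (M *ᵥ x) + α * (x ⬝ᵥ (N *ᵥ x)) := by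
    intro α x
    simp only [add_mulVec, smul_mulVec, dotProduct_add, dotProduct_smul, smul_eq_mul]
  simp only [expand]
  constructor
  · rintro ⟨α, hα⟩ x hx
    simpa [hx] using hα x
  · intro h
    obtain ⟨u₀, v₀, hu₀, hv₀⟩ := hind
    let S : Set ℝ := {r | ∃ u : Fin n → ℝ, 0 < u ⬝ᵥ (N *ᵥ u) ∧
      r = -(u ⬝ᵥ (M *ᵥ u)) / (u ⬝ᵥ (N *ᵥ u))}
    have hub : ∀ v : Fin n → ℝ, v ⬝ᵥ (N *ᵥ v) < 0 →
        -(v ⬝ᵥ (M *ᵥ v)) / (v ⬝ᵥ (N *ᵥ v)) ∈ upperBounds S := by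
      rintro v hv _ ⟨u, hu, rfl⟩
      rw [le_div_iff_of_neg hv, div_mul_eq_mul_div, le_div_iff₀ hu]
      linear_combination cross_nonneg h hu hv
    refine ⟨sSup S, fun x => ?_⟩
    rcases lt_trichotomy (x ⬝ᵥ (N *ᵥ x)) 0 with hx | hx | hx
    · have := csSup_le (⟨_, u₀, hu₀, rfl⟩ : S.Nonempty) (hub x hx)
      rw [le_div_iff_of_neg hx] at this
      linarith
    · simpa [hx] using h x hx
    · have := le_csSup ⟨_, hub v₀ hv₀⟩ (show _ ∈ S from ⟨x, hx, rfl⟩)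
      rw [div_le_iff₀ hx] at this
      linarith
end
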